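/- arXiv:2403.00518 — 8 statements merged into one kernel-verified Lean document; each statement's English description precedes it below -/
import Mathlib

section
/- Let K be a field of characteristic zero and F ⊆ K a subfield. Let q : F → K be a quadratic function satisfying q(xy) = q(x)y² + x²q(y) for all nonzero x, y ∈ F. Then there exists a second-order derivation d : F → K such that q(x) = 4x·d(x) − d(x²) for all x ∈ F. -/
/-- `B : F → F → K` is symmetric and additive in each variable. -/
def IsSymmBiadditive {K : Type*} [Field K] (F : Subfield K) (B : F → F → K) : Prop :=
  (∀ x y : F, B x y = B y x) ∧
  (∀ x y z : F, B (x + y) z = B x z + B y z) ∧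
  (∀ x y z : F, B x (y + z) = B x y + B x z)

/-- `q : F → K` is a quadratic function: the trace of a symmetric bi-additive map. -/
def IsQuadratic {K : Type*} [Field K] (F : Subfield K) (q : F → K) : Prop :=
  ∃ B : F → F → K, IsSymmBiadditive F B ∧ ∀ x : F, q x = B x x

/-- `d : F → K` is a second-order derivation: `d` is additive and there is a map
`B` with `d(xy) - x d(y) - d(x) y = B(x,y)` which is a derivation (additive and
Leibniz) in each variable. -/
def IsSecondOrderDerivation {K : Type*} [Field K] (F : Subfield K) (d : F → K) : Prop :=
  (∀ x y : F, d (x + y) = d x + d y) ∧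
  ∃ B : F → F → K,
    (∀ x y : F, d (x * y) - (x : K) * d y - d x * (y : K) = B x y) ∧
    (∀ y u v : F, B (u + v) y = B u y + B v y) ∧
    (∀ y u v : F, B (u * v) y = (u : K) * B v y + (v : K) * B u y) ∧
    (∀ x u v : F, B x (u + v) = B x u + B x v) ∧
    (∀ x u v : F, B x (u * v) = (u : K) * B x v + (v : K) * B x u)

theorem stmt_1 {K : Type*} [Field K] [CharZero K] (F : Subfield K)
    (q : F → K) (hq : IsQuadratic F q)
    (heq : ∀ x y : F, x ≠ 0 → y ≠ 0 →
      q (x * y) = q x * (y : K) ^ 2 + (x : K) ^ 2 * q y) :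
    ∃ d : F → K, IsSecondOrderDerivation F d ∧
      ∀ x : F, q x = 4 * (x : K) * d x - d (x ^ 2) := by
  obtain ⟨B, ⟨hsymm, hadd, hadd'⟩, hqB⟩ := hq
  have hzero : ∀ y, B 0 y = 0 := fun y => by
    have h := hadd 0 0 y
    rw [add_zero] at h
    linear_combination -h
  have hmul : ∀ x y : F, B (x * y) (x * y) = B x x * (y : K) ^ 2 + (x : K) ^ 2 * B y y := by
    intro x y
    by_cases hx : x = 0
    · simp [hx, hzero]
    by_cases hy : y = 0
    · simp [hy, hzero]
    simpa only [hqB] using heq x y hx hy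
  have h_one : B 1 1 = 0 := by
    have h := hmul 1 1
    simp only [mul_one, OneMemClass.coe_one, one_pow, one_mul] at h
    linear_combination -h
  have h_left : ∀ x y : F, B (x * y) y = B x 1 * (y : K) ^ 2 + (x : K) * B y y := by
    intro x y
    have h := hmul (x + 1) y
    simp only [add_mul, one_mul, hadd, hadd', Subfield.coe_add, OneMemClass.coe_one] at h
    rw [hsymm y (x * y), hsymm 1 x, h_one, hmul x y] at h
    refine mul_left_cancel₀ (two_ne_zero (α := K)) ?_
    linear_combination h
  have h_right : ∀ x y z : F, B (x * y) z + B (x * z) y =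
      2 * B x 1 * (y : K) * z + 2 * (x : K) * B y z := by
    intro x y z
    have h := h_left x (y + z)
    simp only [mul_add, hadd, hadd', Subfield.coe_add] at h
    rw [hsymm z y] at h
    linear_combination h - h_left x y - h_left x z
  have hB : ∀ x y : F, B x y = 2 * ((x : K) * B y 1 + (y : K) * B x 1) - B (x * y) 1 := by
    intro x y
    have h := h_right x y 1
    simp only [mul_one, OneMemClass.coe_one] at h
    linear_combination h
  have h_triple : ∀ x y z : F, B (x * y * z) 1 =
      (z : K) * B (x * y) 1 + (y : K) * B (x * z) 1 + (x : K) * B (y * z) 1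
        - (x : K) * y * B z 1 - (x : K) * z * B y 1 - (y : K) * z * B x 1 := by
    intro x y z
    have h := h_right x y z
    rw [hB (x * y) z, hB (x * z) y, hB y z, mul_right_comm x z y] at h
    simp only [Subfield.coe_mul] at h
    refine mul_left_cancel₀ (two_ne_zero (α := K)) ?_
    linear_combination -h
  refine ⟨fun x => B x 1, ⟨fun x y => hadd x y 1,
    fun x y => B (x * y) 1 - (x : K) * B y 1 - B x 1 * (y : K), fun _ _ => rfl,
    ?_, ?_, ?_, ?_⟩, ?_⟩
  · intro y u v
    simp only [add_mul, hadd, Subfield.coe_add]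
    ring
  · intro y u v
    simp only [h_triple u v y, Subfield.coe_mul]
    ring
  · intro x u v
    simp only [mul_add, hadd, Subfield.coe_add]
    ring
  · intro x u v
    simp only [← mul_assoc, h_triple x u v, Subfield.coe_mul]
    ring
  · intro x
    rw [hqB, hB x x, pow_two]
    ring
end

section
/- Let K be a field of characteristic zero and F ⊆ K a subfield. Let q : F → K be a quadratic function and φ₁, φ₂ : F → K homomorphisms, not identically zero, such that q(xy) = φ₁(x)φ₂(x)q(y) + φ₁(y)φ₂(y)q(x) for all x, y ∈ F. Then there exists an additive function a : F → K with a(1) = 0 such that q(x) = 2(φ₁(x)+φ₂(x))a(x) − a(x²) for all x ∈ F, and a satisfies the identity 2a(xyz) − (φ₁(x)+φ₂(x))a(yz) − (φ₁(y)+φ₂(y))a(xz) − (φ₁(z)+φ₂(z))a(xy) + (φ₁(x)φ₂(y)+φ₂(x)φ₁(y))a(z) + (φ₁(x)φ₂(z)+φ₂(x)φ₁(z))a(y) + (φ₁(y)φ₂(z)+φ₂(y)φ₁(z))a(x) = 0 for all x, y, z ∈ F. Conversely, if a : F → K is additive and satisfies this identity with the homomorphisms φ₁, φ₂, then q(x)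 := 2(φ₁(x)+φ₂(x))a(x) − a(x²) is a quadratic function satisfying q(xy) = φ₁(x)φ₂(x)q(y) + φ₁(y)φ₂(y)q(x) for all x, y ∈ F. -/
/-- `φ : F → K` is a (ring) homomorphism: additive and multiplicative. -/
def IsHom {K : Type*} [Field K] (F : Subfield K) (φ : F → K) : Prop :=
  (∀ x y : F, φ (x + y) = φ x + φ y) ∧ (∀ x y : F, φ (x * y) = φ x * φ y)

/-- The identity (♠) for an additive function `a` and homomorphisms `φ₁, φ₂`. -/
def SpadeIdentity {K : Type*} [Field K] (F : Subfield K) (φ₁ φ₂ a : F → K) : Prop :=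
  ∀ x y z : F,
    2 * a (x * y * z)
      - (φ₁ x + φ₂ x) * a (y * z)
      - (φ₁ y + φ₂ y) * a (x * z)
      - (φ₁ z + φ₂ z) * a (x * y)
      + (φ₁ x * φ₂ y + φ₂ x * φ₁ y) * a z
      + (φ₁ x * φ₂ z + φ₂ x * φ₁ z) * a y
      + (φ₁ y * φ₂ z + φ₂ y * φ₁ z) * a x = 0

theorem IsHom.map_one {K : Type*} [Field K] {F : Subfield K} {φ : F → K} (h : IsHom F φ)
    (hne : ∃ x : F, φ x ≠ 0) : φ 1 = 1 := by
  obtain ⟨x, hx⟩ := hne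
  have h1 := h.2 x 1
  rw [mul_one] at h1
  exact mul_left_cancel₀ hx (by rw [← h1, mul_one])

/-- Full polarization of `B (xy) (xy) = φ₁ x φ₂ x B y y + φ₁ y φ₂ y B x x`. -/
theorem IsSymmBiadditive.polarize {K : Type*} [Field K] [CharZero K] {F : Subfield K}
    {φ₁ φ₂ : F → K} (hφ₁ : IsHom F φ₁) (hφ₂ : IsHom F φ₂) {B : F → F → K}
    (hB : IsSymmBiadditive F B)
    (h : ∀ x y : F, B (x * y) (x * y) = φ₁ x * φ₂ x * B y y + φ₁ y * φ₂ y * B x x)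
    (x y z w : F) :
    B (x * y) (z * w) + B (x * w) (z * y) =
      (φ₁ x * φ₂ z + φ₂ x * φ₁ z) * B y w + (φ₁ y * φ₂ w + φ₂ y * φ₁ w) * B x z := by
  obtain ⟨hsymm, hleft, hright⟩ := hB
  have two_ne : (2 : K) ≠ 0 := two_ne_zero
  have polarize_left (x y z : F) : 2 * B (x * y) (z * y) =
      (φ₁ x * φ₂ z + φ₂ x * φ₁ z) * B y y + 2 * (φ₁ y * φ₂ y) * B x z := by
    have e := h (x + z) y
    simp only [add_mul, hleft, hright, hφ₁.1, hφ₂.1] at e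
    rw [hsymm (z * y) (x * y), hsymm z x] at e
    linear_combination e - h x y - h z y
  have e := polarize_left x (y + w) z
  simp only [mul_add, hleft, hright, hφ₁.1, hφ₂.1] at e
  rw [hsymm w y] at e
  apply mul_left_cancel₀ two_ne
  linear_combination e - polarize_left x y z - polarize_left x w z

theorem stmt_3 {K : Type*} [Field K] [CharZero K] (F : Subfield K)
    (φ₁ φ₂ : F → K) (hφ₁ : IsHom F φ₁) (hφ₂ : IsHom F φ₂)
    (hφ₁ne : ∃ x : F, φ₁ x ≠ 0) (hφ₂ne : ∃ x : F, φ₂ x ≠ 0) :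
    (∀ q : F → K, IsQuadratic F q →
      (∀ x y : F, q (x * y) = φ₁ x * φ₂ x * q y + φ₁ y * φ₂ y * q x) →
      ∃ a : F → K, (∀ x y : F, a (x + y) = a x + a y) ∧ a 1 = 0 ∧
        (∀ x : F, q x = 2 * (φ₁ x + φ₂ x) * a x - a (x ^ 2)) ∧
        SpadeIdentity F φ₁ φ₂ a) ∧
    (∀ a : F → K, (∀ x y : F, a (x + y) = a x + a y) → SpadeIdentity F φ₁ φ₂ a →
      IsQuadratic F (fun x : F => 2 * (φ₁ x + φ₂ x) * a x - a (x ^ 2)) ∧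
      ∀ x y : F,
        2 * (φ₁ (x * y) + φ₂ (x * y)) * a (x * y) - a ((x * y) ^ 2) =
          φ₁ x * φ₂ x * (2 * (φ₁ y + φ₂ y) * a y - a (y ^ 2)) +
            φ₁ y * φ₂ y * (2 * (φ₁ x + φ₂ x) * a x - a (x ^ 2))) := by
  have one₁ := hφ₁.map_one hφ₁ne
  have one₂ := hφ₂.map_one hφ₂ne
  refine ⟨?_, ?_⟩
  · rintro q ⟨B, hB, hq⟩ h
    simp only [hq] at h
    have polar := hB.polarize hφ₁ hφ₂ h
    have B_one : B 1 1 = 0 := by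
      have e := h 1 1
      simp only [mul_one, one₁, one₂] at e
      linear_combination -e
    have B_eq (x y : F) :
        B x y = (φ₁ x + φ₂ x) * B y 1 + (φ₁ y + φ₂ y) * B x 1 - B (x * y) 1 := by
      have e := polar x y 1 1
      simp only [mul_one, one_mul, one₁, one₂] at e
      linear_combination e
    refine ⟨fun x => B x 1, fun x y => hB.2.1 x y 1, B_one, fun x => ?_, fun x y z => ?_⟩
    · rw [hq, B_eq, pow_two]
      ring
    · have e := polar x y z 1
      simp only [mul_one, one₁, one₂] at e
      rw [B_eq (x * y) z, B_eq x (z * y), B_eq x z, mul_comm z y, ← mul_assoc x y z] at e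
      simp only [hφ₁.2, hφ₂.2] at e
      linear_combination -e
  · intro a ha hs
    refine ⟨⟨fun x y => (φ₁ x + φ₂ x) * a y + (φ₁ y + φ₂ y) * a x - a (x * y),
      ⟨fun x y => ?_, fun x y z => ?_, fun x y z => ?_⟩, fun x => ?_⟩, fun x y => ?_⟩
    · simp only [mul_comm y x]
      ring
    · simp only [add_mul x y z, ha, hφ₁.1, hφ₂.1]
      ring
    · simp only [mul_add x y z, ha, hφ₁.1, hφ₂.1]
      ring
    · simp only [pow_two]
      ring
    · have e₁ := hs (x * y) x y
      have e₂ := hs (x ^ 2) y y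
      have e₃ := hs (y ^ 2) x x
      have e₄ := hs x x y
      have e₅ := hs x y y
      rw [show x * y * x * y = (x * y) ^ 2 by ring, show x * y * y = x * y ^ 2 by ring,
        show x * y * x = x ^ 2 * y by ring] at e₁
      rw [show x ^ 2 * y * y = (x * y) ^ 2 by ring, ← pow_two y] at e₂
      rw [show y ^ 2 * x * x = (x * y) ^ 2 by ring, ← pow_two x, mul_comm (y ^ 2) x] at e₃
      rw [← pow_two x] at e₄
      rw [show x * y * y = x * y ^ 2 by ring, ← pow_two y] at e₅
      simp only [pow_two x, pow_two y, hφ₁.2, hφ₂.2] at e₁ e₂ e₃ e₄ e₅ ⊢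
      linear_combination -e₁ + e₂ / 4 + e₃ / 4 - (φ₁ y + φ₂ y) / 4 * e₄
        - (φ₁ x + φ₂ x) / 4 * e₅
end

section
/- Let K be a field of characteristic zero and F ⊆ K a subfield. Let B : F × F → K be a symmetric bi-additive map such that q(x) = B(x,x) satisfies q(xy) = q(x)q(y) for all nonzero x, y ∈ F, and suppose q(1) = 1. Define the additive function a : F → K by a(x) = B(x,1). Then B(x,y) = 2a(x)a(y) − a(xy) for all x, y ∈ F, hence q(x) = 2a(x)² − a(x²) for all x ∈ F, and a(1) = 1. -/
theorem stmt_9 {K : Type*} [Field K] [CharZero K] (F : Subfield K)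
    (B : F → F → K) (hB : IsSymmBiadditive F B)
    (q : F → K) (hq : ∀ x : F, q x = B x x)
    (hmult : ∀ x y : F, x ≠ 0 → y ≠ 0 → q (x * y) = q x * q y)
    (hone : q 1 = 1)
    (a : F → K) (ha : ∀ x : F, a x = B x 1) :
    (∀ x y : F, B x y = 2 * a x * a y - a (x * y)) ∧
    (∀ x : F, q x = 2 * a x ^ 2 - a (x ^ 2)) ∧
    a 1 = 1 := by
  obtain ⟨hsymm, hleft, hright⟩ := hB
  have hzero : ∀ x : F, B 0 x = 0 := fun x => by simpa using hleft 0 0 x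
  have hmul : ∀ x y : F, B (x * y) (x * y) = B x x * B y y := by
    intro x y
    by_cases hx : x = 0
    · simp [hx, hzero]
    by_cases hy : y = 0
    · simp [hy, hzero]
    simpa only [hq] using hmult x y hx hy
  have hpol : ∀ x z y : F, B (x * y) (z * y) = B x z * B y y := by
    intro x z y
    have h := hmul (x + z) y
    simp only [add_mul, hleft, hright, hmul] at h
    rw [hsymm (z * y) (x * y), hsymm z x] at h
    exact mul_left_cancel₀ (two_ne_zero (α := K)) (by linear_combination h)
  have hB11 : B 1 1 = 1 := by rw [← hq, hone]
  have hmain : ∀ x y : F, B x y = 2 * a x * a y - a (x * y) := by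
    intro x y
    have h := hpol x 1 (y + 1)
    have h₁ := hpol x 1 y
    simp only [mul_add, mul_one, one_mul, hleft, hright] at h h₁
    rw [hsymm 1 y] at h
    simp only [ha]
    linear_combination h - h₁ + B x 1 * hB11
  refine ⟨hmain, fun x => ?_, by rw [ha, hB11]⟩
  rw [hq, hmain, ← sq x]
  ring
end

section
/- Let K be a field of characteristic zero and F ⊆ K a subfield. Let B : F × F → K be a symmetric bi-additive map such that q(x) = B(x,x) satisfies q(xy) = q(x)q(y) for all nonzero x, y ∈ F and q(1) = 1, and let a(x) = B(x,1). Then the additive function a satisfies −a(xyz) + a(x)a(yz) + a(y)a(xz) + (a(xy) − 2a(x)a(y))a(z) = 0 for all x, y, z ∈ F; consequently, for each fixed z ∈ F the additive function A_z(x) := a(xz) − a(x)a(z) satisfies A_z(xy) = a(x)A_z(y) + A_z(x)a(y) for all x, y ∈ F. -/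
/-- Polarization in both arguments of a multiplicative quadratic function. -/
theorem IsSymmBiadditive.polarization {K : Type*} [Field K] [CharZero K] {F : Subfield K}
    {B : F → F → K} (hB : IsSymmBiadditive F B)
    (hmul : ∀ x y : F, B (x * y) (x * y) = B x x * B y y) (x x' y y' : F) :
    B (x * y) (x' * y') + B (x' * y) (x * y') = 2 * B x x' * B y y' := by
  obtain ⟨hsymm, hadd_left, hadd_right⟩ := hB
  have hsemi (x y y' : F) : B (x * y) (x * y') = B x x * B y y' := by
    have h := hmul x (y + y')
    simp only [mul_add, hadd_left, hadd_right] at h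
    rw [hsymm (x * y') (x * y), hsymm y' y] at h
    refine mul_left_cancel₀ (two_ne_zero (α := K)) ?_
    linear_combination h - hmul x y - hmul x y'
  have h := hsemi (x + x') y y'
  simp only [add_mul, hadd_left, hadd_right] at h
  rw [hsymm x' x] at h
  linear_combination h - hsemi x y y' - hsemi x' y y'

theorem stmt_10 {K : Type*} [Field K] [CharZero K] (F : Subfield K)
    (B : F → F → K) (hB : IsSymmBiadditive F B)
    (q : F → K) (hq : ∀ x : F, q x = B x x)
    (hmult : ∀ x y : F, x ≠ 0 → y ≠ 0 → q (x * y) = q x * q y)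
    (hone : q 1 = 1)
    (a : F → K) (ha : ∀ x : F, a x = B x 1) :
    (∀ x y z : F,
      -a (x * y * z) + a x * a (y * z) + a y * a (x * z) +
        (a (x * y) - 2 * a x * a y) * a z = 0) ∧
    (∀ z x y : F,
      (a (x * y * z) - a (x * y) * a z) =
        a x * (a (y * z) - a y * a z) + (a (x * z) - a x * a z) * a y) := by
  have hmul (x y : F) : B (x * y) (x * y) = B x x * B y y := by
    have hzero : B 0 0 = 0 := by simpa using hB.2.1 0 0 0
    rcases eq_or_ne x 0 with rfl | hx
    · simp [hzero]
    rcases eq_or_ne y 0 with rfl | hy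
    · simp [hzero]
    simpa only [hq] using hmult x y hx hy
  have hB_eq (x y : F) : B x y = 2 * a x * a y - a (x * y) := by
    have h := hB.polarization hmul x 1 y 1
    simp only [one_mul, mul_one, ← ha] at h
    rw [hB.1 y x] at h
    linear_combination h
  have key (x y z : F) : -a (x * y * z) + a x * a (y * z) + a y * a (x * z) +
      (a (x * y) - 2 * a x * a y) * a z = 0 := by
    have h := hB.polarization hmul x z y 1
    rw [mul_one, mul_one, ← ha, hB_eq (x * y) z, hB_eq (z * y) x, hB_eq x z,
      show z * y * x = x * y * z by ring, mul_comm z y] at h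
    refine mul_left_cancel₀ (two_ne_zero (α := K)) ?_
    linear_combination h
  exact ⟨key, fun z x y => by linear_combination -key x y z⟩
end

section
/- Let K be a field of characteristic zero and F ⊆ K a subfield. Let B : F × F → K be a symmetric bi-additive map such that q(x) = B(x,x) satisfies q(xy) = q(x)y² + x²q(y) for all nonzero x, y ∈ F. Then q(1) = B(1,1) = 0, and defining the additive function a : F → K by a(x) = B(x,1), one has B(x,y) = 2x·a(y) + 2y·a(x) − a(xy) for all x, y ∈ F; in particular q(x) = 4x·a(x) − a(x²) for all x ∈ F. -/
theorem stmt_11 {K : Type*} [Field K] [CharZero K] (F : Subfield K)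
    (B : F → F → K) (hB : IsSymmBiadditive F B)
    (q : F → K) (hq : ∀ x : F, q x = B x x)
    (heq : ∀ x y : F, x ≠ 0 → y ≠ 0 →
      q (x * y) = q x * (y : K) ^ 2 + (x : K) ^ 2 * q y)
    (a : F → K) (ha : ∀ x : F, a x = B x 1) :
    q 1 = 0 ∧ B 1 1 = 0 ∧
    (∀ x y : F, B x y = 2 * (x : K) * a y + 2 * (y : K) * a x - a (x * y)) ∧
    (∀ x : F, q x = 4 * (x : K) * a x - a (x ^ 2)) := by
  obtain ⟨hsymm, hadd, hadd'⟩ := hB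
  have hzero : ∀ y : F, B 0 y = 0 := fun y => by
    have h := hadd 0 0 y
    rw [add_zero] at h
    linear_combination -h
  have hmul : ∀ x y : F, B (x * y) (x * y) = B x x * (y : K) ^ 2 + (x : K) ^ 2 * B y y := by
    intro x y
    by_cases hx : x = 0
    · simp [hx, hzero]
    by_cases hy : y = 0
    · simp [hy, hzero]
    simpa only [hq] using heq x y hx hy
  have hone : B 1 1 = 0 := by
    have h := hmul 1 1
    simp only [mul_one, OneMemClass.coe_one, one_pow, one_mul] at h
    linear_combination -h
  have hpolar : ∀ x y : F, B (x * y) y = B x 1 * (y : K) ^ 2 + (x : K) * B y y := by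
    intro x y
    have h := hmul (x + 1) y
    simp only [add_mul, one_mul, hadd, hadd', Subfield.coe_add, OneMemClass.coe_one,
      hsymm y (x * y), hsymm 1 x] at h
    have h2 : (2 : K) ≠ 0 := two_ne_zero
    apply mul_left_cancel₀ h2
    linear_combination h - hmul x y + (y : K) ^ 2 * hone
  have hmain : ∀ x y : F, B x y = 2 * (x : K) * a y + 2 * (y : K) * a x - a (x * y) := by
    intro x y
    have h := hpolar x (y + 1)
    simp only [mul_add, mul_one, hadd, hadd', Subfield.coe_add, OneMemClass.coe_one,
      hsymm 1 y] at h
    simp only [ha]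
    linear_combination h - hpolar x y + (x : K) * hone
  refine ⟨(hq 1).trans hone, hone, hmain, fun x => ?_⟩
  rw [hq, hmain, sq]
  ring
end

section
/- Let K be a field of characteristic zero and F ⊆ K a subfield. Let B : F × F → K be a symmetric bi-additive map such that q(x) = B(x,x) satisfies q(xy) = q(x)y² + x²q(y) for all nonzero x, y ∈ F, and let a(x) = B(x,1). Then the additive function a satisfies a(x⁴) − 6x²·a(x²) + 8x³·a(x) = 0 for all x ∈ F. -/
/-- If `q x = B x x` satisfies `q (x * y) = q x * y ^ 2 + x ^ 2 * q y`, then comparing the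
values of `q` at `x ^ 2 - 1 = (x + 1) * (x - 1)` gives a formula for `B (x ^ 2) 1`. -/
theorem IsSymmBiadditive.apply_sq_one {K : Type*} [Field K] [CharZero K] {F : Subfield K}
    {B : F → F → K} (hB : IsSymmBiadditive F B)
    (hmul : ∀ x y : F, B (x * y) (x * y) = B x x * (y : K) ^ 2 + (x : K) ^ 2 * B y y) (x : F) :
    B (x ^ 2) 1 = 4 * (x : K) * B x 1 - B x x := by
  obtain ⟨hsymm, hleft, hright⟩ := hB
  have hone : B 1 1 = 0 := by simpa using hmul 1 1
  have hadd (u : F) : B (u + 1) (u + 1) = B u u + 2 * B u 1 := by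
    rw [hleft, hright, hright, hsymm 1 u, hone]; ring
  have hsub (u : F) : B (u - 1) (u - 1) = B u u - 2 * B u 1 := by
    have h := hadd (u - 1)
    have h' := hleft (u - 1) 1 1
    rw [sub_add_cancel] at h h'
    linear_combination -h + 2 * h' + 2 * hone
  have hprod := hmul (x + 1) (x - 1)
  rw [show (x + 1) * (x - 1) = x ^ 2 - 1 by ring, hsub, hsub, hadd, sq, hmul] at hprod
  push_cast at hprod
  rw [sq]
  refine mul_left_cancel₀ (two_ne_zero (α := K)) ?_
  linear_combination -hprod

theorem stmt_12 {K : Type*} [Field K] [CharZero K] (F : Subfield K)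
    (B : F → F → K) (hB : IsSymmBiadditive F B)
    (q : F → K) (hq : ∀ x : F, q x = B x x)
    (heq : ∀ x y : F, x ≠ 0 → y ≠ 0 →
      q (x * y) = q x * (y : K) ^ 2 + (x : K) ^ 2 * q y)
    (a : F → K) (ha : ∀ x : F, a x = B x 1) :
    ∀ x : F, a (x ^ 4) - 6 * (x : K) ^ 2 * a (x ^ 2) + 8 * (x : K) ^ 3 * a x = 0 := by
  intro x
  have hzero : B 0 0 = 0 := by simpa using hB.2.1 0 0 0
  have hmul (x y : F) : B (x * y) (x * y) = B x x * (y : K) ^ 2 + (x : K) ^ 2 * B y y := by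
    rcases eq_or_ne x 0 with rfl | hx
    · simp [hzero]
    rcases eq_or_ne y 0 with rfl | hy
    · simp [hzero]
    simpa only [hq] using heq x y hx hy
  have hx := hB.apply_sq_one hmul x
  have hx2 := hB.apply_sq_one hmul (x ^ 2)
  have hq2 : B (x ^ 2) (x ^ 2) = 2 * (x : K) ^ 2 * B x x := by
    rw [sq, hmul]; ring
  rw [← pow_mul, hq2] at hx2
  push_cast at hx2
  rw [ha, ha, ha]
  linear_combination hx2 - 2 * (x : K) ^ 2 * hx
end

section
/- Let K be a field of characteristic zero and F ⊆ K a subfield, and let q : F → K be a quadratic function. Then q satisfies q(x²) = 2x²·q(x) for all x ∈ F if and only if q satisfies q(xy) = x²q(y) + y²q(x) for all x, y ∈ F. -/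
/-- An additive map satisfying `a (x³) = 3 x a (x²) - 3 x² a x` is a differential operator of order
at most two: this is the polarized identity. -/
lemma map_mul_mul_of_map_cube {K : Type*} [Field K] [CharZero K] {F : Subfield K} (a : F →+ K)
    (h : ∀ x : F, a (x * x * x) = 3 * (x : K) * a (x * x) - 3 * (x : K) ^ 2 * a x) (x y z : F) :
    a (x * y * z) = x * a (y * z) + y * a (x * z) + z * a (x * y)
      - x * y * a z - x * z * a y - y * z * a x := by
  have hxyz := h (x + y + z)
  have hxy := h (x + y)
  have hxz := h (x + z)
  have hyz := h (y + z)
  have hx := h x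
  have hy := h y
  have hz := h z
  simp only [add_mul, mul_add, map_add, Subfield.coe_add, mul_comm, mul_left_comm]
    at hxyz hxy hxz hyz hx hy hz ⊢
  linear_combination (hxyz - hxy - hxz - hyz + hx + hy + hz) / 6

theorem stmt_14 {K : Type*} [Field K] [CharZero K] (F : Subfield K)
    (q : F → K) (hq : IsQuadratic F q) :
    (∀ x : F, q (x ^ 2) = 2 * (x : K) ^ 2 * q x) ↔
      (∀ x y : F, q (x * y) = (x : K) ^ 2 * q y + (y : K) ^ 2 * q x) := by
  obtain ⟨B₀, ⟨hsymm, hadd_left, hadd_right⟩, hqB⟩ := hq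
  constructor
  swap
  · intro h x
    rw [pow_two, h]
    ring
  intro h
  obtain ⟨B, hB⟩ : ∃ B : F →+ F →+ K, ∀ x y, B x y = B₀ x y :=
    ⟨AddMonoidHom.mk' (fun x => AddMonoidHom.mk' (B₀ x) (hadd_right x))
      fun x y => AddMonoidHom.ext (hadd_left x y), fun _ _ => rfl⟩
  simp only [← hB] at hsymm hqB
  simp only [hqB, pow_two] at h ⊢
  have hone : B 1 1 = 0 := by
    have h₁ := h 1
    simp only [mul_one, Subfield.coe_one] at h₁
    linear_combination -h₁
  -- The even and odd parts in `t` of the hypothesis at `x + t`, for `t = ±1`.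
  have heven (x : F) : B x x = 4 * x * B x 1 - B (x * x) 1 := by
    have hp := h (x + 1)
    have hm := h (x - 1)
    simp only [add_mul, mul_add, sub_mul, mul_sub, map_add, map_sub, AddMonoidHom.add_apply,
      AddMonoidHom.sub_apply, Subfield.coe_add, Subfield.coe_sub, Subfield.coe_one, mul_one,
      one_mul, hone, hsymm 1, hsymm x (x * x)] at hp hm
    linear_combination (hp + hm) / 4 - h x / 2
  have hodd (x : F) : B (x * x) x = (x : K) ^ 2 * B x 1 + x * B x x := by
    have hp := h (x + 1)
    have hm := h (x - 1)
    simp only [add_mul, mul_add, sub_mul, mul_sub, map_add, map_sub, AddMonoidHom.add_apply,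
      AddMonoidHom.sub_apply, Subfield.coe_add, Subfield.coe_sub, Subfield.coe_one, mul_one,
      one_mul, hone, hsymm 1, hsymm x (x * x)] at hp hm
    linear_combination (hp - hm) / 8
  have hpolar (x y : F) : B x y = 2 * x * B y 1 + 2 * y * B x 1 - B (x * y) 1 := by
    have hxy := heven (x + y)
    simp only [add_mul, mul_add, map_add, AddMonoidHom.add_apply, Subfield.coe_add,
      hsymm y x, mul_comm y x] at hxy
    linear_combination (hxy - heven x - heven y) / 2
  have hmul := map_mul_mul_of_map_cube (B.flip 1) fun x => by
    have hx := hodd x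
    rw [hpolar, heven] at hx
    simp only [AddMonoidHom.flip_apply, Subfield.coe_mul] at hx ⊢
    linear_combination -hx
  intro x y
  have hxxyy := hmul x x (y * y)
  have hxyy := hmul x y y
  simp only [AddMonoidHom.flip_apply, Subfield.coe_mul, mul_assoc x y y] at hxxyy hxyy
  rw [heven, heven x, heven y, mul_mul_mul_comm x y x y]
  simp only [Subfield.coe_mul]
  linear_combination -hxxyy - 2 * (x : K) * hxyy
end

section
/- Let K be a field of characteristic zero and F ⊆ K a subfield. Suppose q₀, q₁ : F → K are quadratic functions with q₀(x) = x² for all x ∈ F, and q₁(xy) = q₀(x)q₁(y) + q₁(x)q₀(y) for all nonzero x, y ∈ F (the degree-one generalized moment condition on the multiplicative group of F). Then there exists a second-order derivation d : F → K such that q₁(x) = 4x·d(x) − d(x²) for all x ∈ F; equivalently, the function a(x) := q₁(x)/x² is additive on the multiplicative group F \ {0} and has the form a(x) = 4·d(x)/x − d(x²)/x². -/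
/-- If `q x = B x x` satisfies `q (x * y) = x ^ 2 * q y + q x * y ^ 2`, then `B` satisfies the
identity obtained by polarizing in both variables. -/
lemma IsSymmBiadditive.polarized_moment {K : Type*} [Field K] [CharZero K] {F : Subfield K}
    {B : F → F → K} (hB : IsSymmBiadditive F B)
    (h : ∀ x y : F, B (x * y) (x * y) = (x : K) ^ 2 * B y y + B x x * (y : K) ^ 2)
    (x u y v : F) :
    B (x * y) (u * v) + B (x * v) (u * y) =
      2 * (x : K) * u * B y v + 2 * (y : K) * v * B x u := by
  obtain ⟨hs, hl, hr⟩ := hB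
  have polar_left (x u y : F) :
      B (x * y) (u * y) = (x : K) * u * B y y + B x u * (y : K) ^ 2 := by
    have e := h (x + u) y
    simp only [add_mul, hl, hr, Subfield.coe_add] at e
    have e₁ := hs (u * y) (x * y)
    have e₂ := hs u x
    have := h x y
    have := h u y
    have two : (2 : K) ≠ 0 := two_ne_zero
    apply mul_left_cancel₀ two
    grind
  have e := polar_left x u (y + v)
  simp only [mul_add, hl, hr, Subfield.coe_add] at e
  have := polar_left x u y
  have := polar_left x u v
  have := hs v y
  grind

/-- Under the degree-one moment condition, `x ↦ B x 1` is a second-order derivation. -/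
lemma IsSymmBiadditive.isSecondOrderDerivation {K : Type*} [Field K] [CharZero K]
    {F : Subfield K} {B : F → F → K} (hB : IsSymmBiadditive F B)
    (h : ∀ x y : F, B (x * y) (x * y) = (x : K) ^ 2 * B y y + B x x * (y : K) ^ 2) :
    IsSecondOrderDerivation F (fun x => B x 1) := by
  have polar := hB.polarized_moment h
  have hl := hB.2.1
  have hd (x y : F) : B x y = 2 * (x : K) * B y 1 + 2 * (y : K) * B x 1 - B (x * y) 1 := by
    have e := polar x 1 y 1
    simp only [mul_one, one_mul, Subfield.coe_one] at e
    linear_combination e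
  have key (u v y : F) : B (u * v) y + B u (y * v) =
      2 * (u : K) * y * B v 1 + 2 * (v : K) * B u y := by
    simpa using polar u y v 1
  have leibniz (u v y : F) :
      B (u * v * y) 1 - ((u * v : F) : K) * B y 1 - B (u * v) 1 * (y : K) =
        (u : K) * (B (v * y) 1 - (v : K) * B y 1 - B v 1 * (y : K)) +
          (v : K) * (B (u * y) 1 - (u : K) * B y 1 - B u 1 * (y : K)) := by
    have e₁ := key u v y
    have e₂ := key v y u
    have e₃ := key y u v
    rw [hd (u * v) y, hd u (y * v), hd u y] at e₁
    rw [hd (v * y) u, hd v (u * y), hd v u] at e₂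
    rw [hd (y * u) v, hd y (v * u), hd y v] at e₃
    rw [show u * (y * v) = u * v * y by ring, mul_comm y v] at e₁
    rw [show v * y * u = u * v * y by ring, show v * (u * y) = u * v * y by ring,
      mul_comm v u] at e₂
    rw [show y * u * v = u * v * y by ring, show y * (v * u) = u * v * y by ring,
      mul_comm y u, mul_comm v u, mul_comm y v] at e₃
    push_cast at e₁ e₂ e₃ ⊢
    linear_combination (e₂ - e₁ - e₃) / 2
  refine ⟨fun x y => hl x y 1, fun x y => B (x * y) 1 - (x : K) * B y 1 - B x 1 * (y : K),
    fun _ _ => rfl, fun y u v => ?_, fun y u v => leibniz u v y, fun x u v => ?_,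
    fun x u v => ?_⟩
  · simp only [add_mul, hl, Subfield.coe_add]
    ring
  · simp only [mul_add, hl, Subfield.coe_add]
    ring
  · have e := leibniz u v x
    simp only [mul_comm _ x] at e
    linear_combination e

theorem stmt_16 {K : Type*} [Field K] [CharZero K] (F : Subfield K)
    (q₀ q₁ : F → K) (hq₀quad : IsQuadratic F q₀) (hq₁quad : IsQuadratic F q₁)
    (hq₀ : ∀ x : F, q₀ x = (x : K) ^ 2)
    (hmom : ∀ x y : F, x ≠ 0 → y ≠ 0 →
      q₁ (x * y) = q₀ x * q₁ y + q₁ x * q₀ y) :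
    ∃ d : F → K, IsSecondOrderDerivation F d ∧
      (∀ x : F, q₁ x = 4 * (x : K) * d x - d (x ^ 2)) ∧
      (∀ x y : F, x ≠ 0 → y ≠ 0 →
        q₁ (x * y) / ((x : K) * (y : K)) ^ 2 =
          q₁ x / (x : K) ^ 2 + q₁ y / (y : K) ^ 2) ∧
      (∀ x : F, x ≠ 0 →
        q₁ x / (x : K) ^ 2 = 4 * d x / (x : K) - d (x ^ 2) / (x : K) ^ 2) := by
  obtain ⟨B, hB, hq⟩ := hq₁quad
  have h0 : q₁ 0 = 0 := by
    have := hB.2.1 0 0 0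
    rw [add_zero] at this
    rw [hq]
    linear_combination -this
  have hmul (x y : F) : q₁ (x * y) = (x : K) ^ 2 * q₁ y + q₁ x * (y : K) ^ 2 := by
    rcases eq_or_ne x 0 with rfl | hx
    · simp [h0]
    rcases eq_or_ne y 0 with rfl | hy
    · simp [h0]
    rw [hmom x y hx hy, hq₀, hq₀]
  have hmulB (x y : F) :
      B (x * y) (x * y) = (x : K) ^ 2 * B y y + B x x * (y : K) ^ 2 := by
    simpa only [hq] using hmul x y
  have hform (x : F) : q₁ x = 4 * (x : K) * B x 1 - B (x ^ 2) 1 := by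
    have e := hB.polarized_moment hmulB x 1 x 1
    simp only [mul_one, one_mul, Subfield.coe_one] at e
    rw [hq, sq]
    linear_combination e
  refine ⟨fun x => B x 1, hB.isSecondOrderDerivation hmulB, hform, fun x y hx hy => ?_,
    fun x hx => ?_⟩
  · have hx' : (x : K) ≠ 0 := by simpa using hx
    have hy' : (y : K) ≠ 0 := by simpa using hy
    rw [hmul]
    field_simp
    ring
  · have hx' : (x : K) ≠ 0 := by simpa using hx
    rw [hform]
    field_simp
end
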